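/- (Theorem 6.6, half-turn symmetry in 3-space.) Let G be a finite simple graph with |E| = 3|V| − 6, let C ∈ O(3) be a half-turn (an orthogonal involution of ℝ³ with determinant 1 whose fixed subspace is 1-dimensional), S = {I, C}, and let Φ : S → Aut(G) be a homomorphism such that Φ(C) has no fixed vertex and fixes no edge setwise. Let (G,p) be an S-symmetric framework of type Φ in ℝ³ whose points p_i affinely span ℝ³ and which admits no nonzero fully (S,Φ)-symmetric self-stress (this last hypothesis playing the role of the paper's '(S,Φ)-generic' assumption, as licensed by Remark 6.2). Then (G,p) has a finite flex preserving the symmetry throughout the path. -/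

import Mathlib

open scoped Classical

noncomputable section

abbrev Euc (d : ℕ) : Type := EuclideanSpace ℝ (Fin d)

/-- The subspace of points of `ℝ^d` fixed by a linear isometry (orthogonal transformation). -/
def fixedSpace {d : ℕ} (x : Euc d ≃ₗᵢ[ℝ] Euc d) : Submodule ℝ (Euc d) :=
  LinearMap.ker (x.toLinearEquiv.toLinearMap - LinearMap.id)

open Filter Topology
open scoped RealInnerProductSpace

/-!
Let `X` be the space of symmetric configurations and `Y` the space of symmetric edge weights. A
symmetric edge weight orthogonal to the image of the rigidity map `X → Y` is a symmetric
self-stress, so this map is onto when there are none, and the squared edge lengths are then a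
submersion `X → Y` at `p`. As the symmetry acts freely on vertices and edges,
`dim X = d|V| / 2` and `dim Y = |E| / 2`. A symmetric trivial motion has the form `x ↦ A x + t`
with `A` skew-adjoint and commuting with `C` and with `t` fixed by `C`; such an `A` preserves the
fixed space of `C`, of dimension `f` say, and its orthogonal complement, so that the symmetric
trivial motions have dimension at most `f + (f choose 2) + (d - f choose 2)`, which is `2` for a
half-turn of `ℝ³`. Since `3|V| / 2 - |E| / 2 = 3 > 2` there, some symmetric infinitesimal flex is
nontrivial, and by the implicit function theorem it is the initial velocity of a symmetric finite
flex.
-/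

section ImplicitCurve

variable {E F : Type*} [NormedAddCommGroup E] [NormedSpace ℝ E] [CompleteSpace E]
  [NormedAddCommGroup F] [NormedSpace ℝ F] [FiniteDimensional ℝ F]
  {f : E → F} {f' : E →L[ℝ] F} {a v : E}

lemma exists_curve_in_fiber_of_range_eq_top (hf : HasStrictFDerivAt f f' a)
    (hsurj : f'.range = ⊤) (hv : f' v = 0) :
    ∃ c : ℝ → E, c 0 = a ∧ HasDerivAt c v 0 ∧
      ∀ᶠ t in 𝓝 0, f (c t) = f a ∧ ContinuousAt c t := by
  let w : f'.ker := ⟨v, hv⟩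
  let ψ : f'.ker → E := hf.implicitFunction f f' hsurj (f a)
  have hψ : HasStrictFDerivAt ψ f'.ker.subtypeL 0 := hf.to_implicitFunction hsurj
  have hline : Tendsto (fun t : ℝ => t • w) (𝓝 0) (𝓝 0) :=
    Continuous.tendsto' (by fun_prop) _ _ (zero_smul ℝ w)
  have hfiber : ∀ᶠ z in 𝓝 (0 : f'.ker), f (ψ z) = f a :=
    ((Continuous.prodMk_right (f a)).tendsto' 0 (f a, 0) rfl).eventually
      (hf.map_implicitFunction_eq hsurj)
  have hcont : ∀ᶠ z in 𝓝 (0 : f'.ker), ContinuousAt ψ z := by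
    obtain ⟨K, s, hs, hlip⟩ := hψ.exists_lipschitzOnWith
    exact (eventually_mem_nhds_iff.2 hs).mono fun z hz => hlip.continuousOn.continuousAt hz
  refine ⟨fun t => ψ (t • w), by simp [ψ], ?_, ?_⟩
  · have hw : HasDerivAt (fun t : ℝ => t • w) w 0 := by
      simpa using (hasDerivAt_id (0 : ℝ)).smul_const w
    exact hψ.hasFDerivAt.comp_hasDerivAt_of_eq 0 hw (zero_smul ℝ w).symm
  · filter_upwards [hline.eventually hfiber, hline.eventually hcont] with t hft hct
    exact ⟨hft, hct.comp (f := fun s : ℝ => s • w) (by fun_prop)⟩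

lemma exists_curve_in_fiber (hf : HasStrictFDerivAt f f' a) (hmem : ∀ x, f x ∈ f'.range)
    (hv : f' v = 0) :
    ∃ c : ℝ → E, c 0 = a ∧ HasDerivAt c v 0 ∧
      ∀ᶠ t in 𝓝 0, f (c t) = f a ∧ ContinuousAt c t := by
  obtain ⟨π, hπ⟩ := f'.range.subtype.exists_leftInverse_of_injective (Submodule.ker_subtype _)
  have hπ_apply (y : f'.range) : π y = y := LinearMap.congr_fun hπ y
  let πL : F →L[ℝ] f'.range := π.toContinuousLinearMap
  have hsurj : (πL ∘L f').range = ⊤ := by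
    refine LinearMap.range_eq_top.2 fun y => ?_
    obtain ⟨x, hx⟩ := y.2
    exact ⟨x, (congrArg π hx).trans (hπ_apply y)⟩
  obtain ⟨c, hc0, hcv, hc⟩ := exists_curve_in_fiber_of_range_eq_top (v := v)
    (πL.hasStrictFDerivAt.comp a hf) hsurj (by simp [hv])
  refine ⟨c, hc0, hcv, hc.mono fun t ht => ⟨?_, ht.2⟩⟩
  have hproj : π (f (c t)) = π (f a) := ht.1
  rw [hπ_apply ⟨_, hmem _⟩, hπ_apply ⟨_, hmem _⟩] at hproj
  exact congrArg Subtype.val hproj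

lemma exists_path_in_fiber (hf : HasStrictFDerivAt f f' a) (hmem : ∀ x, f x ∈ f'.range)
    (hv : f' v = 0) {g : E → ℝ} {g' : E →L[ℝ] ℝ} (hg : HasFDerivAt g g' a) (hgv : g' v ≠ 0) :
    ∃ γ : ℝ → E, ContinuousOn γ (Set.Icc 0 1) ∧ γ 0 = a ∧
      (∀ t ∈ Set.Icc (0 : ℝ) 1, f (γ t) = f a) ∧ ∀ t ∈ Set.Ioc (0 : ℝ) 1, g (γ t) ≠ g a := by
  obtain ⟨c, hc0, hcv, hc⟩ := exists_curve_in_fiber hf hmem hv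
  have hgc : HasDerivAt (g ∘ c) (g' v) 0 := hg.comp_hasDerivAt_of_eq 0 hcv hc0.symm
  have hne : ∀ᶠ t in 𝓝 (0 : ℝ), t ≠ 0 → g (c t) ≠ g a :=
    eventually_nhdsWithin_iff.1 (hgc.eventually_ne hgv)
  obtain ⟨δ, hδ, hball⟩ := Metric.eventually_nhds_iff_ball.1 (hc.and hne)
  have hscale (t : ℝ) (ht : t ∈ Set.Icc (0 : ℝ) 1) : δ / 2 * t ∈ Metric.ball (0 : ℝ) δ := by
    rw [mem_ball_zero_iff, Real.norm_of_nonneg (by have := ht.1; positivity)]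
    nlinarith [ht.2]
  refine ⟨fun t => c (δ / 2 * t), fun t ht => ?_, by simp [hc0],
    fun t ht => (hball _ (hscale t ht)).1.1, fun t ht => ?_⟩
  · have hct : ContinuousAt c (δ / 2 * t) := (hball _ (hscale t ht)).1.2
    exact (hct.comp (f := fun s => δ / 2 * s) (by fun_prop)).continuousWithinAt
  · exact (hball _ (hscale t (Set.Ioc_subset_Icc_self ht))).2 (mul_pos (half_pos hδ) ht.1).ne'

end ImplicitCurve

lemma hasStrictFDerivAt_bilin_self {E F : Type*} [NormedAddCommGroup E] [NormedSpace ℝ E]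
    [FiniteDimensional ℝ E] [NormedAddCommGroup F] [NormedSpace ℝ F] [FiniteDimensional ℝ F]
    (B : E →ₗ[ℝ] E →ₗ[ℝ] F) (hB : ∀ x y, B x y = B y x) (a : E) :
    HasStrictFDerivAt (fun x => B x x) ((2 : ℝ) • (B a).toContinuousLinearMap) a := by
  refine ((B.toContinuousBilinearMap.hasStrictFDerivAt (x := a)).clm_apply
    (hasStrictFDerivAt_id a)).congr_fderiv ?_
  ext y
  simp [two_smul, hB y a]

lemma exists_path_in_fiber_bilin_self {E F : Type*} [NormedAddCommGroup E] [NormedSpace ℝ E]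
    [FiniteDimensional ℝ E] [NormedAddCommGroup F] [NormedSpace ℝ F] [FiniteDimensional ℝ F]
    {B : E →ₗ[ℝ] E →ₗ[ℝ] F} {b : E →ₗ[ℝ] E →ₗ[ℝ] ℝ} {a v : E} (hB : ∀ x y, B x y = B y x)
    (hmem : ∀ x, B x x ∈ (B a).range) (hv : B a v = 0) (hb : ∀ x y, b x y = b y x)
    (hbv : b a v ≠ 0) :
    ∃ γ : ℝ → E, ContinuousOn γ (Set.Icc 0 1) ∧ γ 0 = a ∧
      (∀ t ∈ Set.Icc (0 : ℝ) 1, B (γ t) (γ t) = B a a) ∧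
      ∀ t ∈ Set.Ioc (0 : ℝ) 1, b (γ t) (γ t) ≠ b a a := by
  have := FiniteDimensional.complete ℝ E
  refine exists_path_in_fiber (v := v) (hasStrictFDerivAt_bilin_self B hB a) (fun x => ?_)
    (by simp [hv]) (hasStrictFDerivAt_bilin_self b hb a).hasFDerivAt (by simp [hbv])
  obtain ⟨y, hy⟩ := hmem x
  exact ⟨(2⁻¹ : ℝ) • y, by simp [hy]⟩

section Equivariant

variable {ι R M : Type*} [Ring R] [AddCommGroup M] [Module R M]

/-- The maps `q : ι → M` with `C ∘ q = q ∘ σ`. For the vertex permutation and the isometry of a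
symmetric framework these are the symmetric configurations; for the edge permutation and `C = id`
they are the symmetric edge weights. -/
def equivariantMaps (σ : ι → ι) (C : M →ₗ[R] M) : Submodule R (ι → M) :=
  LinearMap.eqLocus (C.compLeft ι) (LinearMap.funLeft R M σ)

lemma mem_equivariantMaps {σ : ι → ι} {C : M →ₗ[R] M} {q : ι → M} :
    q ∈ equivariantMaps σ C ↔ ∀ i, C (q i) = q (σ i) :=
  funext_iff

lemma exists_transversal_of_involutive [Finite ι] {σ : ι → ι} (hσ : σ.Involutive)
    (hfree : ∀ i, σ i ≠ i) : ∃ T : Set ι, ∀ i, σ i ∈ T ↔ i ∉ T := by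
  let o := Finite.equivFin ι
  refine ⟨{i | o i < o (σ i)}, fun i => ?_⟩
  have hne : o (σ i) ≠ o i := fun h => hfree i (o.injective h)
  simp only [Set.mem_ofPred_eq, hσ i, not_lt]
  exact hne.le_iff_lt.symm

lemma two_mul_ncard_transversal [Finite ι] {σ : ι → ι} (hσ : σ.Involutive) {T : Set ι}
    (hT : ∀ i, σ i ∈ T ↔ i ∉ T) : 2 * T.ncard = Nat.card ι := by
  have hcompl : σ '' T = Tᶜ := by
    ext i
    simp [hσ.image_eq_preimage_symm, hT]
  rw [← Set.ncard_add_ncard_compl T, ← hcompl, Set.ncard_image_of_injective _ hσ.injective, two_mul]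

/-- An equivariant map is determined by its values, which are arbitrary, on a set `T` meeting every
orbit of `σ` exactly once. -/
def equivariantMapsEquivTransversal {σ : ι → ι} (hσ : σ.Involutive) {C : M →ₗ[R] M}
    (hC : Function.Involutive C) {T : Set ι} (hT : ∀ i, σ i ∈ T ↔ i ∉ T) :
    equivariantMaps σ C ≃ₗ[R] (T → M) where
  toFun q i := q.1 i
  map_add' _ _ := rfl
  map_smul' _ _ := rfl
  invFun r := ⟨fun i => if h : i ∈ T then r ⟨i, h⟩ else C (r ⟨σ i, (hT i).2 h⟩),
    mem_equivariantMaps.2 fun i => by by_cases h : i ∈ T <;> simp [h, hT, hσ i, hC _]⟩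
  left_inv q := by
    ext i
    by_cases h : i ∈ T
    · simp [h]
    · simp [h, mem_equivariantMaps.1 q.2, hσ i]
  right_inv r := by
    ext i
    simp

lemma two_mul_finrank_equivariantMaps [StrongRankCondition R] [Module.Free R M]
    [Module.Finite R M] [Finite ι] {σ : ι → ι} (hσ : σ.Involutive) (hfree : ∀ i, σ i ≠ i)
    {C : M →ₗ[R] M} (hC : Function.Involutive C) :
    2 * Module.finrank R (equivariantMaps σ C) = Nat.card ι * Module.finrank R M := by
  obtain ⟨T, hT⟩ := exists_transversal_of_involutive hσ hfree
  have := Fintype.ofFinite T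
  rw [(equivariantMapsEquivTransversal hσ hC hT).finrank_eq, Module.finrank_pi_fintype,
    Finset.sum_const, Finset.card_univ, smul_eq_mul, ← mul_assoc, ← Nat.card_eq_fintype_card,
    Nat.card_coe_set_eq, two_mul_ncard_transversal hσ hT]

end Equivariant

section SkewAdjoint

variable {E : Type*} [NormedAddCommGroup E] [InnerProductSpace ℝ E]

lemma mem_skewAdjointSubmodule_innerₗ {A : Module.End ℝ E} :
    A ∈ (innerₗ E).skewAdjointSubmodule ↔ ∀ x y, ⟪A x, y⟫ = -⟪x, A y⟫ := by
  rw [LinearMap.mem_skewAdjointSubmodule]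
  exact forall₂_congr fun x y => by simp

/-- The compression `A ↦ P ∘ A|_F` of an endomorphism to a subspace `F`, where `P` is the orthogonal
projection onto `F`. -/
def compression (F : Submodule ℝ E) [F.HasOrthogonalProjection] :
    Module.End ℝ E →ₗ[ℝ] Module.End ℝ F :=
  LinearMap.lcomp ℝ F F.subtype ∘ₗ LinearMap.compRight ℝ F.orthogonalProjectionOnto.toLinearMap

lemma compression_apply (F : Submodule ℝ E) [F.HasOrthogonalProjection]
    (A : Module.End ℝ E) (x : F) : compression F A x = F.orthogonalProjectionOnto (A x) :=
  rfl

lemma compression_mem_skewAdjointSubmodule (F : Submodule ℝ E) [F.HasOrthogonalProjection]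
    {A : Module.End ℝ E} (hA : A ∈ (innerₗ E).skewAdjointSubmodule) :
    compression F A ∈ (innerₗ F).skewAdjointSubmodule := by
  rw [mem_skewAdjointSubmodule_innerₗ] at hA ⊢
  intro x y
  simpa only [compression_apply, Submodule.inner_orthogonalProjectionOnto_eq_of_mem_left,
    Submodule.inner_orthogonalProjectionOnto_eq_of_mem_right] using hA x y

lemma orthogonal_le_comap_of_skewAdjoint {F : Submodule ℝ E} {A : Module.End ℝ E}
    (hA : A ∈ (innerₗ E).skewAdjointSubmodule) (hF : F ≤ F.comap A) : Fᗮ ≤ Fᗮ.comap A := by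
  intro x hx
  rw [Submodule.mem_comap, Submodule.mem_orthogonal']
  intro y hy
  rw [mem_skewAdjointSubmodule_innerₗ.1 hA,
    Submodule.inner_left_of_mem_orthogonal (K := F) (hF hy) hx, neg_zero]

lemma apply_eq_zero_of_compression_eq_zero {F : Submodule ℝ E} [F.HasOrthogonalProjection]
    {A : Module.End ℝ E} (hF : F ≤ F.comap A) (h : compression F A = 0)
    {x : E} (hx : x ∈ F) : A x = 0 := by
  have hproj : F.orthogonalProjectionOnto (A x) = 0 := LinearMap.congr_fun h ⟨x, hx⟩
  rw [← F.starProjection_eq_self_iff.2 (hF hx), Submodule.starProjection_apply, hproj,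
    Submodule.coe_zero]

variable [FiniteDimensional ℝ E]

-- A skew-adjoint map is determined by its matrix entries above the diagonal.
lemma finrank_skewAdjointSubmodule_le :
    Module.finrank ℝ (innerₗ E).skewAdjointSubmodule ≤ (Module.finrank ℝ E).choose 2 := by
  let n := Module.finrank ℝ E
  let b : OrthonormalBasis (Fin n) ℝ E := stdOrthonormalBasis ℝ E
  let upperEntries : Module.End ℝ E →ₗ[ℝ] ({x : Fin n × Fin n // x.1 < x.2} → ℝ) :=
    LinearMap.pi fun x => innerₗ E (b x.1.1) ∘ₗ LinearMap.applyₗ (b x.1.2)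
  have hinj : Function.Injective
      (upperEntries.domRestrict (innerₗ E).skewAdjointSubmodule) := by
    refine (injective_iff_map_eq_zero _).2 fun ⟨A, hA⟩ hentries => Subtype.ext ?_
    rw [mem_skewAdjointSubmodule_innerₗ] at hA
    have hupper (i j : Fin n) (hij : i < j) : ⟪b i, A (b j)⟫ = 0 :=
      congrFun hentries ⟨(i, j), hij⟩
    have hentry (i j : Fin n) : ⟪b i, A (b j)⟫ = 0 := by
      rcases lt_trichotomy i j with hij | rfl | hij
      · exact hupper i j hij
      · linarith [hA (b i) (b i), real_inner_comm (b i) (A (b i))]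
      · linarith [hA (b i) (b j), real_inner_comm (A (b i)) (b j), hupper j i hij]
    exact b.toBasis.ext fun j =>
      InnerProductSpace.ext_inner_left_basis b.toBasis fun i => by simpa using hentry i j
  have hcard : Fintype.card {x : Fin n × Fin n // x.1 < x.2} = n.choose 2 := by
    simpa [Fintype.card_subtype] using
      Finset.card_product_filter_lt (s := (Finset.univ : Finset (Fin n)))
  simpa [hcard] using LinearMap.finrank_le_finrank_of_injective hinj

lemma finrank_skewAdjoint_inf_compatibleMaps_le (F : Submodule ℝ E) :
    Module.finrank ℝ ↥((innerₗ E).skewAdjointSubmodule ⊓ F.compatibleMaps F) ≤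
      (Module.finrank ℝ F).choose 2 + (Module.finrank ℝ Fᗮ).choose 2 := by
  let K := (innerₗ E).skewAdjointSubmodule ⊓ F.compatibleMaps F
  let blocks (W : Submodule ℝ E) : K →ₗ[ℝ] (innerₗ W).skewAdjointSubmodule :=
    (compression W).restrict fun _ hA => compression_mem_skewAdjointSubmodule W hA.1
  have hinj : Function.Injective ((blocks F).prod (blocks Fᗮ)) := by
    refine (injective_iff_map_eq_zero _).2 fun ⟨A, hA, hAF⟩ hblocks => Subtype.ext ?_
    have hcompF : compression F A = 0 := congrArg (Subtype.val ∘ Prod.fst) hblocks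
    have hcompF' : compression Fᗮ A = 0 := congrArg (Subtype.val ∘ Prod.snd) hblocks
    ext x
    obtain ⟨y, hy, z, hz, rfl⟩ := F.exists_add_mem_mem_orthogonal x
    rw [map_add, apply_eq_zero_of_compression_eq_zero hAF hcompF hy,
      apply_eq_zero_of_compression_eq_zero (orthogonal_le_comap_of_skewAdjoint hA hAF) hcompF' hz]
    simp
  calc Module.finrank ℝ K
      ≤ Module.finrank ℝ ((innerₗ F).skewAdjointSubmodule × (innerₗ Fᗮ).skewAdjointSubmodule) :=
        LinearMap.finrank_le_finrank_of_injective hinj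
    _ ≤ _ := by
        rw [Module.finrank_prod]
        exact add_le_add finrank_skewAdjointSubmodule_le finrank_skewAdjointSubmodule_le

end SkewAdjoint

section Framework

variable {V E : Type*} [NormedAddCommGroup E] [InnerProductSpace ℝ E]

/-- The polarised squared-length map, `sqLengthForm q r s(i, j) = ⟪q i - q j, r i - r j⟫`. Its
diagonal records all squared distances of a configuration, and `sqLengthForm p v` is half the rate
of change of the squared distances of `p` under the velocities `v`. -/
def sqLengthForm : (V → E) →ₗ[ℝ] (V → E) →ₗ[ℝ] (Sym2 V → ℝ) :=
  LinearMap.mk₂ ℝ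
    (fun q r => Sym2.lift ⟨fun i j => ⟪q i - q j, r i - r j⟫, fun i j => by
      simp only [← neg_sub (q j) (q i), ← neg_sub (r j) (r i), inner_neg_neg]⟩)
    (fun _ _ _ => funext <| Sym2.ind fun _ _ => by
      simp [add_sub_add_comm, inner_add_left])
    (fun _ _ _ => funext <| Sym2.ind fun _ _ => by
      simp [← smul_sub, real_inner_smul_left])
    (fun _ _ _ => funext <| Sym2.ind fun _ _ => by
      simp [add_sub_add_comm, inner_add_right])
    (fun _ _ _ => funext <| Sym2.ind fun _ _ => by
      simp [← smul_sub, real_inner_smul_right])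

lemma sqLengthForm_mk (q r : V → E) (i j : V) :
    sqLengthForm q r s(i, j) = ⟪q i - q j, r i - r j⟫ :=
  rfl

lemma sqLengthForm_self_mk (q : V → E) (i j : V) :
    sqLengthForm q q s(i, j) = ‖q i - q j‖ ^ 2 :=
  real_inner_self_eq_norm_sq _

lemma sqLengthForm_comm (q r : V → E) : sqLengthForm q r = sqLengthForm r q :=
  funext <| Sym2.ind fun _ _ => real_inner_comm _ _

lemma sqLengthForm_map {σ : V → V} {C : E →ₗᵢ[ℝ] E} {q r : V → E}
    (hq : q ∈ equivariantMaps σ C.toLinearMap) (hr : r ∈ equivariantMaps σ C.toLinearMap)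
    (e : Sym2 V) : sqLengthForm q r (e.map σ) = sqLengthForm q r e := by
  induction e with | _ i j
  simp only [mem_equivariantMaps, LinearIsometry.coe_toLinearMap] at hq hr
  rw [Sym2.map_mk, sqLengthForm_mk, sqLengthForm_mk, ← hq, ← hq, ← hr, ← hr, ← map_sub, ← map_sub,
    C.inner_map_map]

/-- The restriction of `sqLengthForm` to the edges of `G`; `rigidityForm G p` is the map given by
the rigidity matrix of the framework `(G, p)`. -/
def rigidityForm (G : SimpleGraph V) : (V → E) →ₗ[ℝ] (V → E) →ₗ[ℝ] (G.edgeSet → ℝ) :=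
  sqLengthForm.compr₂ (LinearMap.funLeft ℝ ℝ Subtype.val)

lemma rigidityForm_apply (G : SimpleGraph V) (q r : V → E) (e : G.edgeSet) :
    rigidityForm G q r e = sqLengthForm q r e :=
  rfl

lemma rigidityForm_mem_equivariantMaps {G : SimpleGraph V} (σ : G ≃g G) {C : E →ₗᵢ[ℝ] E}
    {q r : V → E} (hq : q ∈ equivariantMaps σ C.toLinearMap)
    (hr : r ∈ equivariantMaps σ C.toLinearMap) :
    rigidityForm G q r ∈ equivariantMaps σ.mapEdgeSet (LinearMap.id : ℝ →ₗ[ℝ] ℝ) :=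
  mem_equivariantMaps.2 fun e => (sqLengthForm_map hq hr e).symm

end Framework

section TrivialMotions

variable {V E : Type*} [NormedAddCommGroup E] [InnerProductSpace ℝ E]

-- The relation `u i ↦ w i` extends to a well-defined map because skewness puts the image of any
-- linear relation among the `u i` in the orthogonal complement of their span.
lemma exists_skewAdjoint_of_span_eq_top {u w : V → E} (hu : Submodule.span ℝ (Set.range u) = ⊤)
    (hskew : ∀ i j, ⟪w i, u j⟫ = -⟪u i, w j⟫) :
    ∃ A ∈ (innerₗ E).skewAdjointSubmodule, ∀ i, A (u i) = w i := by
  let T := Finsupp.linearCombination ℝ u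
  let S := Finsupp.linearCombination ℝ w
  have hTS (a b : V →₀ ℝ) : ⟪S a, T b⟫ = -⟪T a, S b⟫ := by
    have hforms : (innerₗ E).compl₁₂ S T = -(innerₗ E).compl₁₂ T S := by
      ext i j
      simpa [S, T] using hskew i j
    exact LinearMap.congr_fun₂ hforms a b
  obtain ⟨g, hg⟩ := T.exists_rightInverse_of_surjective
    (by rw [Finsupp.range_linearCombination, hu])
  have hTg (x : E) : T (g x) = x := LinearMap.congr_fun hg x
  have hker (a : V →₀ ℝ) (ha : T a = 0) : S a = 0 :=
    ext_inner_right ℝ fun y => by rw [← hTg y, hTS, ha, inner_zero_left, neg_zero, inner_zero_left]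
  refine ⟨S ∘ₗ g, mem_skewAdjointSubmodule_innerₗ.2 fun x y => ?_, fun i => ?_⟩
  · simpa [hTg] using hTS (g x) (g y)
  · have hrel : S (g (u i) - Finsupp.single i 1) = 0 := hker _ (by simp [hTg, T])
    simpa [S, sub_eq_zero] using hrel

lemma exists_skewAdjoint_add_of_sqLengthForm_eq_zero {p v : V → E}
    (hspan : affineSpan ℝ (Set.range p) = ⊤) (hv : sqLengthForm p v = 0) :
    ∃ A ∈ (innerₗ E).skewAdjointSubmodule, ∃ t, ∀ i, v i = A (p i) + t := by
  have hne : (affineSpan ℝ (Set.range p) : Set E).Nonempty := by simp [hspan]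
  obtain ⟨o⟩ : Nonempty V := Set.range_nonempty_iff_nonempty.1 ((affineSpan_nonempty ℝ).1 hne)
  have hinner (k l : V) : ⟪p k - p l, v k - v l⟫ = 0 := congrFun hv s(k, l)
  have hu : Submodule.span ℝ (Set.range fun i => p i - p o) = ⊤ := by
    have hdir : vectorSpan ℝ (Set.range p) = ⊤ := by
      rw [← direction_affineSpan, hspan, AffineSubspace.direction_top]
    rwa [vectorSpan_range_eq_span_range_vsub_right ℝ p o] at hdir
  have hskew (i j : V) : ⟪v i - v o, p j - p o⟫ = -⟪p i - p o, v j - v o⟫ := by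
    have hij : ⟪(p i - p o) - (p j - p o), (v i - v o) - (v j - v o)⟫ = 0 := by
      simpa using hinner i j
    rw [inner_sub_left, inner_sub_right _ (v i - v o), inner_sub_right _ (v i - v o), hinner,
      hinner] at hij
    linarith [real_inner_comm (p j - p o) (v i - v o)]
  obtain ⟨A, hA, hAu⟩ := exists_skewAdjoint_of_span_eq_top (w := fun i => v i - v o) hu hskew
  refine ⟨A, hA, v o - A (p o), fun i => ?_⟩
  have hi : A (p i) - A (p o) = v i - v o := by rw [← map_sub, hAu]
  rw [add_sub_left_comm, hi, add_sub_cancel]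

lemma commute_and_fixed_of_equivariant {σ : V → V} {C A : E →ₗ[ℝ] E} {t : E} {p v : V → E}
    (hspan : affineSpan ℝ (Set.range p) = ⊤) (hp : p ∈ equivariantMaps σ C)
    (hv : v ∈ equivariantMaps σ C) (hvA : ∀ i, v i = A (p i) + t) :
    Commute C A ∧ C t = t := by
  rw [mem_equivariantMaps] at hp hv
  have haffine : (C ∘ₗ A).toAffineMap + AffineMap.const ℝ E (C t) =
      (A ∘ₗ C).toAffineMap + AffineMap.const ℝ E t := by
    refine AffineMap.ext_on hspan ?_
    rintro _ ⟨i, rfl⟩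
    simpa [hvA, hp] using hv i
  have happly (x : E) : C (A x) + C t = A (C x) + t := congrArg (· x) haffine
  have ht : C t = t := by simpa using happly 0
  exact ⟨LinearMap.ext fun x => by simpa [ht] using happly x, ht⟩

lemma mem_fixedSpace {d : ℕ} {C : Euc d ≃ₗᵢ[ℝ] Euc d} {x : Euc d} :
    x ∈ fixedSpace C ↔ C x = x := by
  simp [fixedSpace, sub_eq_zero]

lemma equivariant_trivialMotions_le {d : ℕ} {C : Euc d ≃ₗᵢ[ℝ] Euc d} {σ : V → V}
    {p : V → Euc d} (hspan : affineSpan ℝ (Set.range p) = ⊤)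
    (hp : p ∈ equivariantMaps σ C.toLinearIsometry.toLinearMap) :
    equivariantMaps σ C.toLinearIsometry.toLinearMap ⊓ LinearMap.ker (sqLengthForm p) ≤
      (fixedSpace C).map (LinearMap.pi fun _ => LinearMap.id) ⊔
        ((innerₗ (Euc d)).skewAdjointSubmodule ⊓
          (fixedSpace C).compatibleMaps (fixedSpace C)).map
          (LinearMap.pi fun i => LinearMap.applyₗ (p i)) := by
  rintro v ⟨hvX, hvtriv⟩
  obtain ⟨A, hA, t, hvA⟩ := exists_skewAdjoint_add_of_sqLengthForm_eq_zero hspan hvtriv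
  obtain ⟨hcomm, ht⟩ := commute_and_fixed_of_equivariant hspan hp hvX hvA
  have hAF : fixedSpace C ≤ (fixedSpace C).comap A := fun x hx => mem_fixedSpace.2 <|
    (LinearMap.congr_fun hcomm.eq x).trans (congrArg A (mem_fixedSpace.1 hx))
  refine Submodule.mem_sup.2 ⟨fun _ => t, ⟨t, mem_fixedSpace.2 ht, rfl⟩, fun i => A (p i),
    ⟨A, ⟨hA, hAF⟩, rfl⟩, funext fun i => ?_⟩
  rw [hvA, Pi.add_apply, add_comm]

lemma finrank_equivariant_trivialMotions_le {d : ℕ} [Finite V] {C : Euc d ≃ₗᵢ[ℝ] Euc d}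
    {σ : V → V} {p : V → Euc d} (hspan : affineSpan ℝ (Set.range p) = ⊤)
    (hp : p ∈ equivariantMaps σ C.toLinearIsometry.toLinearMap) :
    Module.finrank ℝ ↥(equivariantMaps σ C.toLinearIsometry.toLinearMap ⊓
        LinearMap.ker (sqLengthForm p)) ≤
      Module.finrank ℝ (fixedSpace C) + (Module.finrank ℝ (fixedSpace C)).choose 2 +
        (d - Module.finrank ℝ (fixedSpace C)).choose 2 := by
  have hcompl : d - Module.finrank ℝ (fixedSpace C) = Module.finrank ℝ (fixedSpace C)ᗮ := by
    have hsum := (fixedSpace C).finrank_add_finrank_orthogonal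
    rw [finrank_euclideanSpace_fin] at hsum
    omega
  rw [hcompl, add_assoc]
  exact (Submodule.finrank_mono (equivariant_trivialMotions_le hspan hp)).trans <|
    (Submodule.finrank_add_le_finrank_add_finrank _ _).trans <|
      add_le_add (Submodule.finrank_map_le _ _) <|
        (Submodule.finrank_map_le _ _).trans (finrank_skewAdjoint_inf_compatibleMaps_le _)

end TrivialMotions

section SelfStress

variable {V E : Type*} [Fintype V] [NormedAddCommGroup E] [InnerProductSpace ℝ E]
  (G : SimpleGraph V) [DecidableRel G.Adj]

lemma sum_sum_neighborFinset_eq_sum_edgeFinset {M : Type*} [AddCommMonoid M] {h : V → V → M}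
    {H : Sym2 V → M} (hH : ∀ i j, G.Adj i j → H s(i, j) = h i j + h j i) :
    ∑ i, ∑ j ∈ G.neighborFinset i, h i j = ∑ e ∈ G.edgeFinset, H e := by
  have hfst (i : V) : ∑ j ∈ G.neighborFinset i, h i j =
      ∑ δ : G.Dart with δ.fst = i, h δ.fst δ.snd := by
    rw [G.dart_fst_fiber, Finset.sum_image fun _ _ _ _ hxy => G.dartOfNeighborSet_injective i hxy]
    exact (Finset.sum_set_coe (G.neighborSet i)).symm
  have hedge (e : Sym2 V) (he : e ∈ G.edgeFinset) :
      ∑ δ : G.Dart with δ.edge = e, h δ.fst δ.snd = H e := by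
    induction e with | _ i j
    let δ : G.Dart := ⟨(i, j), G.mem_edgeFinset.1 he⟩
    rw [show s(i, j) = δ.edge from rfl, δ.edge_fiber, Finset.sum_pair δ.symm_ne.symm]
    exact (hH i j δ.adj).symm
  calc ∑ i, ∑ j ∈ G.neighborFinset i, h i j
      = ∑ δ : G.Dart, h δ.fst δ.snd := by
        simp only [hfst]
        exact Finset.sum_fiberwise _ _ _
    _ = ∑ e ∈ G.edgeFinset, H e := by
        rw [← Finset.sum_fiberwise_of_maps_to fun δ _ => G.mem_edgeFinset.2 δ.edge_mem]
        exact Finset.sum_congr rfl hedge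

/-- The resultant force at each vertex of the edge weights `ω` in the framework `(G, p)`; the
self-stresses are the `ω` with resultant zero. -/
def resultant (ω : Sym2 V → ℝ) (p : V → E) (i : V) : E :=
  ∑ j ∈ G.neighborFinset i, ω s(i, j) • (p i - p j)

lemma sum_inner_resultant (ω : Sym2 V → ℝ) (p q : V → E) :
    ∑ i, ⟪resultant G ω p i, q i⟫ = ∑ e ∈ G.edgeFinset, ω e * sqLengthForm p q e := by
  simp only [resultant, sum_inner, real_inner_smul_left]
  refine sum_sum_neighborFinset_eq_sum_edgeFinset G fun i j _ => ?_
  rw [sqLengthForm_mk, inner_sub_right, ← neg_sub (p j) (p i), inner_neg_left, inner_neg_left,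
    Sym2.eq_swap]
  ring

lemma resultant_mem_equivariantMaps (σ : G ≃g G) {C : E →ₗ[ℝ] E} {ω : Sym2 V → ℝ} {p : V → E}
    (hω : ∀ e ∈ G.edgeSet, ω (e.map σ) = ω e) (hp : p ∈ equivariantMaps σ C) :
    resultant G ω p ∈ equivariantMaps σ C := by
  rw [mem_equivariantMaps] at hp ⊢
  intro i
  simp only [resultant, map_sum, map_smul, map_sub, hp]
  refine Finset.sum_equiv σ.toEquiv (fun j => by simpa using σ.map_adj_iff.symm) fun j hj => ?_
  have hωij := hω s(i, j) ((G.mem_neighborFinset i j).1 hj)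
  rw [Sym2.map_mk] at hωij
  simp [hωij]

end SelfStress

lemma submodule_eq_of_forall_dotProduct_eq_zero {ι : Type*} [Fintype ι] {W Y : Submodule ℝ (ι → ℝ)}
    (hWY : W ≤ Y) (h : ∀ y ∈ Y, (∀ w ∈ W, y ⬝ᵥ w = 0) → y = 0) : W = Y := by
  let φ := (WithLp.linearEquiv 2 ℝ (ι → ℝ)).symm
  have hle : W.map φ.toLinearMap ≤ Y.map φ.toLinearMap := Submodule.map_mono hWY
  have hinf : (W.map φ.toLinearMap)ᗮ ⊓ Y.map φ.toLinearMap = ⊥ := by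
    refine (Submodule.eq_bot_iff _).2 ?_
    rintro _ ⟨hperp, y, hy, rfl⟩
    suffices y = 0 by simp [this]
    refine h y hy fun w hw => ?_
    simpa [φ, EuclideanSpace.inner_toLp_toLp] using hperp _ (Submodule.mem_map_of_mem hw)
  have hsup := Submodule.sup_orthogonal_inf_of_hasOrthogonalProjection hle
  rw [hinf, sup_bot_eq] at hsup
  exact Submodule.map_injective_of_injective φ.injective hsup

lemma exists_mem_ker_notMem_of_finrank_lt {K M N : Type*} [DivisionRing K] [AddCommGroup M]
    [Module K M] [AddCommGroup N] [Module K N] {L : M →ₗ[K] N} {X Z : Submodule K M}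
    [FiniteDimensional K X]
    (h : Module.finrank K ↥(X ⊓ Z) + Module.finrank K (X.map L) < Module.finrank K X) :
    ∃ v ∈ X, L v = 0 ∧ v ∉ Z := by
  by_contra! hker
  have hle : (L.domRestrict X).ker.map X.subtype ≤ X ⊓ Z := by
    rintro _ ⟨v, hv, rfl⟩
    exact ⟨v.2, hker v v.2 hv⟩
  have hfin := Submodule.finrank_mono hle
  rw [Submodule.finrank_map_subtype_eq] at hfin
  have hrank := (L.domRestrict X).finrank_range_add_finrank_ker
  rw [LinearMap.range_domRestrict] at hrank
  omega

section SymmetricFlex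

variable {V E : Type*} [NormedAddCommGroup E] [InnerProductSpace ℝ E]
  {G : SimpleGraph V}

-- A symmetric edge weight orthogonal to the image has a resultant orthogonal to every symmetric
-- configuration, hence to itself, so it is a self-stress.
lemma map_rigidityForm_equivariantMaps [Fintype V] [DecidableRel G.Adj] (σ : G ≃g G)
    {C : E →ₗᵢ[ℝ] E} {p : V → E} (hp : p ∈ equivariantMaps σ C.toLinearMap)
    (hnostress : ∀ ω : Sym2 V → ℝ, resultant G ω p = 0 →
      (∀ e ∈ G.edgeSet, ω (e.map σ) = ω e) → ∀ e ∈ G.edgeSet, ω e = 0) :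
    (equivariantMaps σ C.toLinearMap).map (rigidityForm G p) =
      equivariantMaps σ.mapEdgeSet (LinearMap.id : ℝ →ₗ[ℝ] ℝ) := by
  refine submodule_eq_of_forall_dotProduct_eq_zero ?_ fun ω hω hperp => ?_
  · rintro _ ⟨q, hq, rfl⟩
    exact rigidityForm_mem_equivariantMaps σ hp hq
  let ω' : Sym2 V → ℝ := Function.extend Subtype.val ω 0
  have hω' (e : G.edgeSet) : ω' e = ω e := Subtype.val_injective.extend_apply ω 0 e
  have hinv (e : Sym2 V) (he : e ∈ G.edgeSet) : ω' (e.map σ) = ω' e :=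
    (hω' (σ.mapEdgeSet ⟨e, he⟩)).trans <|
      (mem_equivariantMaps.1 hω ⟨e, he⟩).symm.trans (hω' ⟨e, he⟩).symm
  have hpair (q : V → E) (hq : q ∈ equivariantMaps σ C.toLinearMap) :
      ∑ i, ⟪resultant G ω' p i, q i⟫ = 0 := by
    rw [sum_inner_resultant, SimpleGraph.edgeFinset, ← Finset.sum_set_coe]
    simpa only [dotProduct, rigidityForm_apply, hω'] using
      hperp _ (Submodule.mem_map_of_mem hq)
  have hself := hpair _ (resultant_mem_equivariantMaps G σ hinv hp)
  have hres : resultant G ω' p = 0 := by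
    rw [Finset.sum_eq_zero_iff_of_nonneg fun _ _ => real_inner_self_nonneg] at hself
    exact funext fun i => inner_self_eq_zero.1 (hself i (Finset.mem_univ i))
  exact funext fun e => (hω' e).symm.trans (hnostress ω' hres hinv e e.2)

/-- The framework `(G, p)` has a finite flex all of whose configurations are symmetric with respect
to the vertex permutation `σ` and the map `C` of the ambient space. -/
def HasSymmetricFlex (G : SimpleGraph V) (σ : V → V) (C : E → E) (p : V → E) : Prop :=
  ∃ P : ℝ → V → E,
    ContinuousOn P (Set.Icc 0 1) ∧
    P 0 = p ∧
    (∀ t ∈ Set.Icc (0 : ℝ) 1, ∀ i j, G.Adj i j → ‖P t i - P t j‖ = ‖p i - p j‖) ∧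
    (∃ k l, ∀ t ∈ Set.Ioc (0 : ℝ) 1, ‖P t k - P t l‖ ≠ ‖p k - p l‖) ∧
    ∀ t ∈ Set.Icc (0 : ℝ) 1, ∀ i, C (P t i) = P t (σ i)

lemma hasSymmetricFlex_of_infinitesimal_flex [Finite V] [FiniteDimensional ℝ E] (σ : G ≃g G)
    {C : E →ₗᵢ[ℝ] E} {p v : V → E} (hp : p ∈ equivariantMaps σ C.toLinearMap)
    (hmap : (equivariantMaps σ C.toLinearMap).map (rigidityForm G p) =
      equivariantMaps σ.mapEdgeSet (LinearMap.id : ℝ →ₗ[ℝ] ℝ))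
    (hv : v ∈ equivariantMaps σ C.toLinearMap) (hflex : rigidityForm G p v = 0)
    (hnontriv : sqLengthForm p v ≠ 0) : HasSymmetricFlex G σ C p := by
  have := Fintype.ofFinite V
  obtain ⟨k, l, hkl⟩ : ∃ k l, sqLengthForm p v s(k, l) ≠ 0 := by
    by_contra! h
    exact hnontriv (funext (Sym2.ind h))
  let X := equivariantMaps σ C.toLinearMap
  let edgeForm : X →ₗ[ℝ] X →ₗ[ℝ] (G.edgeSet → ℝ) := (rigidityForm G).domRestrict₁₂ X X
  let klForm : X →ₗ[ℝ] X →ₗ[ℝ] ℝ :=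
    (sqLengthForm.compr₂ (LinearMap.proj s(k, l))).domRestrict₁₂ X X
  have hmem (q : X) : edgeForm q q ∈ (edgeForm ⟨p, hp⟩).range := by
    obtain ⟨r, hr, hqr⟩ := hmap.ge (rigidityForm_mem_equivariantMaps σ q.2 q.2)
    exact ⟨⟨r, hr⟩, hqr⟩
  obtain ⟨γ, hγcont, hγ0, hγedge, hγkl⟩ := exists_path_in_fiber_bilin_self (v := ⟨v, hv⟩)
    (fun q r => congrArg (LinearMap.funLeft ℝ ℝ Subtype.val) (sqLengthForm_comm q.1 r.1))
    hmem hflex (b := klForm) (fun q r => congrFun (sqLengthForm_comm q.1 r.1) s(k, l)) hkl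
  have hnorm (q : V → E) (i j : V) :
      ‖q i - q j‖ = ‖p i - p j‖ ↔ sqLengthForm q q s(i, j) = sqLengthForm p p s(i, j) := by
    rw [sqLengthForm_self_mk, sqLengthForm_self_mk, sq_eq_sq₀ (norm_nonneg _) (norm_nonneg _)]
  exact ⟨fun t => γ t, continuous_subtype_val.comp_continuousOn hγcont, congrArg Subtype.val hγ0,
    fun t ht i j hij => (hnorm _ i j).2 (congrFun (hγedge t ht) ⟨s(i, j), hij⟩),
    ⟨k, l, fun t ht heq => hγkl t ht ((hnorm _ k l).1 heq)⟩,
    fun t _ => mem_equivariantMaps.1 (γ t).2⟩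

lemma mapEdgeSet_involutive {σ : G ≃g G} (hσ : Function.Involutive σ) :
    Function.Involutive σ.mapEdgeSet := fun e =>
  Subtype.ext <| (Sym2.map_map ..).trans <|
    (congrArg (Sym2.map · e.1) hσ.comp_self).trans (congrFun Sym2.map_id e.1)

end SymmetricFlex

theorem stmt_6_general {d : ℕ} {V : Type*} [Fintype V] (G : SimpleGraph V) [DecidableRel G.Adj]
    (C : Euc d ≃ₗᵢ[ℝ] Euc d) (hC : Function.Involutive C)
    {f : ℕ} (hf : Module.finrank ℝ (fixedSpace C) = f)
    (hcount : Nat.card G.edgeSet + 2 * (f + f.choose 2 + (d - f).choose 2) < Nat.card V * d)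
    (σ : G ≃g G) (hσ : Function.Involutive σ) (hfreeV : ∀ i, σ i ≠ i)
    (hfreeE : ∀ e ∈ G.edgeSet, e.map σ ≠ e)
    (p : V → Euc d) (hsym : ∀ i, C (p i) = p (σ i))
    (hspan : affineSpan ℝ (Set.range p) = ⊤)
    (hnostress : ∀ ω : Sym2 V → ℝ, resultant G ω p = 0 →
      (∀ e ∈ G.edgeSet, ω (e.map σ) = ω e) → ∀ e ∈ G.edgeSet, ω e = 0) :
    HasSymmetricFlex G σ C p := by
  let X := equivariantMaps σ C.toLinearIsometry.toLinearMap
  have hp : p ∈ X := mem_equivariantMaps.2 hsym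
  have hmap := map_rigidityForm_equivariantMaps σ hp hnostress
  have hdimX : 2 * Module.finrank ℝ X = Nat.card V * d :=
    (two_mul_finrank_equivariantMaps hσ hfreeV hC).trans (by rw [finrank_euclideanSpace_fin])
  have hdimY : 2 * Module.finrank ℝ (X.map (rigidityForm G p)) = Nat.card G.edgeSet := by
    rw [hmap, two_mul_finrank_equivariantMaps (mapEdgeSet_involutive hσ)
      (fun e he => hfreeE e e.2 (congrArg Subtype.val he)) fun _ => rfl, Module.finrank_self,
      mul_one]
  have hdimTrivial : Module.finrank ℝ ↥(X ⊓ LinearMap.ker (sqLengthForm p)) ≤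
      f + f.choose 2 + (d - f).choose 2 :=
    hf ▸ finrank_equivariant_trivialMotions_le hspan hp
  obtain ⟨v, hv, hflex, hnontriv⟩ : ∃ v ∈ X, rigidityForm G p v = 0 ∧
      v ∉ LinearMap.ker (sqLengthForm p) :=
    exists_mem_ker_notMem_of_finrank_lt (by omega)
  exact hasSymmetricFlex_of_infinitesimal_flex σ hp hmap hv hflex hnontriv

/-- Theorem 6.6, half-turn symmetry in 3-space: `C ∈ O(3)` a
half-turn (orthogonal involution, determinant 1, 1-dimensional fixed subspace),
`S = {I, C}`, `Φ(C) = σ` has no fixed vertex and fixes no edge setwise,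
`|E| = 3|V| - 6`; then a symmetric framework spanning `ℝ³` with no nonzero
fully symmetric self-stress has a symmetry-preserving finite flex. -/
theorem stmt_6 {V : Type*} [Fintype V] [DecidableEq V]
    (G : SimpleGraph V) [DecidableRel G.Adj]
    (hcount : G.edgeFinset.card + 6 = 3 * Fintype.card V)
    (C : Euc 3 ≃ₗᵢ[ℝ] Euc 3) (hC2 : ∀ v, C (C v) = v)
    (hdet : LinearMap.det (C.toLinearEquiv.toLinearMap) = 1)
    (hhalf : Module.finrank ℝ (fixedSpace C) = 1)
    (σ : Equiv.Perm V) (hσ2 : σ * σ = 1)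
    (hσadj : ∀ i j : V, G.Adj (σ i) (σ j) ↔ G.Adj i j)
    (hnofixv : ∀ i : V, σ i ≠ i)
    (hnofixe : ∀ e ∈ G.edgeSet, Sym2.map σ e ≠ e)
    (p : V → Euc 3) (hp : Function.Injective p)
    (hsym : ∀ i, C (p i) = p (σ i))
    (hspan : affineSpan ℝ (Set.range p) = ⊤)
    (hnostress : ∀ ω : Sym2 V → ℝ,
      (∀ i : V, ∑ j ∈ G.neighborFinset i, ω s(i, j) • (p i - p j) = 0) →
      (∀ e ∈ G.edgeSet, ω (Sym2.map σ e) = ω e) →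
      ∀ e ∈ G.edgeSet, ω e = 0) :
    ∃ P : ℝ → V → Euc 3,
      ContinuousOn P (Set.Icc 0 1) ∧
      P 0 = p ∧
      (∀ t ∈ Set.Icc (0:ℝ) 1, ∀ i j : V, G.Adj i j → ‖P t i - P t j‖ = ‖p i - p j‖) ∧
      (∃ k l : V, ∀ t ∈ Set.Ioc (0:ℝ) 1, ‖P t k - P t l‖ ≠ ‖p k - p l‖) ∧
      (∀ t ∈ Set.Icc (0:ℝ) 1, ∀ i, C (P t i) = P t (σ i)) := by
  have hcard : Nat.card G.edgeSet + 4 < Nat.card V * 3 := by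
    rw [Nat.card_eq_fintype_card, Nat.card_eq_fintype_card, ← G.edgeFinset_card]
    omega
  exact stmt_6_general G C hC2 hhalf hcard ⟨σ, hσadj _ _⟩ (Equiv.ext_iff.1 hσ2) hnofixv hnofixe p
    hsym hspan fun ω hω => hnostress ω (congrFun hω)
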